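/- Let (Ω, μ) and (Δ, ν) be measure spaces, let X be a Banach space over 𝕜, let {f_α}_{α∈Ω} and {g_β}_{β∈Δ} be families of (not necessarily bounded) linear functionals on X, and let {τ_α}_{α∈Ω} ⊆ X and {ω_β}_{β∈Δ} ⊆ X. Fix x ∈ X and positive real constants A, B with |f_α(ω_β)| ≤ A and |g_β(τ_α)| ≤ B for all α ∈ Ω, β ∈ Δ. Assume: (i) sup_{α∈Ω} |f_α(x)| and sup_{β∈Δ} |g_β(x)| are finite and strictly positive; (ii) for every α ∈ Ω, the map β ↦ g_β(x) f_α(ω_β) is integrable on (Δ, ν) and f_α(x) = ∫_Δ g_β(x) f_α(ω_β) dν(β); (iii) for every β ∈ Δ, the map α ↦ f_α(x) g_β(τ_α) is integrable on (Ω, μ) and g_β(x) = ∫_Ω f_α(x) g_β(τ_α) dμ(α). Then, in the extended nonnegative reals, μ({α ∈ Ω : f_α(x) ≠ 0}) · ν({β ∈ Δ : g_β(x) ≠ 0}) ≥ 1/(A·B). -/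

import Mathlib

open MeasureTheory ENNReal NNReal

/-!
Let `a` and `b` be the moduli of the coefficient functions of `x`. Bounding the reconstruction
integrals in norm leaves only the two pointwise inequalities `a ≤ A * ∫⁻ b` and `b ≤ B * ∫⁻ a`.
The second one bounds `b` by a constant, so `∫⁻ b ≤ B * (∫⁻ a) * ν (supp b)`, while
`∫⁻ a ≤ (⨆ a) * μ (supp a)`. Inserting both in the first and taking the supremum gives
`⨆ a ≤ A * B * (⨆ a) * μ (supp a) * ν (supp b)`, from which `⨆ a` cancels.
-/

section LIntegral

variable {Ω Δ : Type*} [MeasurableSpace Ω] [MeasurableSpace Δ] {μ : Measure Ω} {ν : Measure Δ}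

lemma lintegral_le_mul_measure_support {a : Ω → ℝ≥0∞} {c : ℝ≥0∞} (h : ∀ᵐ α ∂μ, a α ≤ c) :
    ∫⁻ α, a α ∂μ ≤ c * μ a.support := by
  calc ∫⁻ α, a α ∂μ = ∫⁻ α in a.support, a α ∂μ :=
        (setLIntegral_eq_of_support_subset subset_rfl).symm
    _ ≤ ∫⁻ _ in a.support, c ∂μ := lintegral_mono_ae (ae_restrict_of_ae h)
    _ = c * μ a.support := setLIntegral_const _ _

lemma one_le_mul_measure_support_of_le_lintegral {a : Ω → ℝ≥0∞} {b : Δ → ℝ≥0∞} {A B : ℝ≥0∞}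
    (ha_zero : ⨆ α, a α ≠ 0) (ha_top : ⨆ α, a α ≠ ⊤)
    (hab : ∀ α, a α ≤ A * ∫⁻ β, b β ∂ν) (hba : ∀ β, b β ≤ B * ∫⁻ α, a α ∂μ) :
    1 ≤ A * B * (μ a.support * ν b.support) := by
  have ha_int : ∫⁻ α, a α ∂μ ≤ (⨆ α, a α) * μ a.support :=
    lintegral_le_mul_measure_support (ae_of_all _ (le_iSup a))
  have hb_int : ∫⁻ β, b β ∂ν ≤ B * (∫⁻ α, a α ∂μ) * ν b.support :=
    lintegral_le_mul_measure_support (ae_of_all _ hba)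
  refine (ENNReal.mul_le_mul_iff_right ha_zero ha_top).1 ?_
  calc (⨆ α, a α) * 1 ≤ A * ∫⁻ β, b β ∂ν := by simpa only [mul_one] using iSup_le hab
    _ ≤ A * (B * ((⨆ α, a α) * μ a.support) * ν b.support) := by
        gcongr
        exact hb_int.trans (by gcongr)
    _ = (⨆ α, a α) * (A * B * (μ a.support * ν b.support)) := by ring

end LIntegral

section IntegralOperator

variable {Ω Δ R : Type*} [MeasurableSpace Ω] [MeasurableSpace Δ]
  [NonUnitalNormedRing R] [NormedSpace ℝ R]

lemma enorm_integral_mul_le {μ : Measure Ω} {u k : Ω → R} {C : ℝ} (hk : ∀ᵐ α ∂μ, ‖k α‖ ≤ C) :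
    ‖∫ α, u α * k α ∂μ‖ₑ ≤ ENNReal.ofReal C * ∫⁻ α, ‖u α‖ₑ ∂μ := by
  have hbound : ∀ᵐ α ∂μ, ‖u α * k α‖ₑ ≤ ENNReal.ofReal C * ‖u α‖ₑ := by
    filter_upwards [hk] with α hα
    calc ‖u α * k α‖ₑ = ENNReal.ofReal ‖u α * k α‖ := (ofReal_norm _).symm
      _ ≤ ENNReal.ofReal (‖u α‖ * C) := ENNReal.ofReal_le_ofReal (norm_mul_le_of_le le_rfl hα)
      _ = ENNReal.ofReal C * ‖u α‖ₑ := by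
          rw [ENNReal.ofReal_mul (norm_nonneg _), ofReal_norm, mul_comm]
  calc ‖∫ α, u α * k α ∂μ‖ₑ ≤ ∫⁻ α, ‖u α * k α‖ₑ ∂μ := enorm_integral_le_lintegral_enorm _
    _ ≤ ∫⁻ α, ENNReal.ofReal C * ‖u α‖ₑ ∂μ := lintegral_mono_ae hbound
    _ = ENNReal.ofReal C * ∫⁻ α, ‖u α‖ₑ ∂μ := lintegral_const_mul' _ _ ENNReal.ofReal_ne_top

theorem unbounded_infty_schauder_uncertainty_general [CompleteSpace R]
    (μ : Measure Ω) (ν : Measure Δ) (u : Ω → R) (v : Δ → R) (k : Ω → Δ → R) (l : Δ → Ω → R)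
    {A B : ℝ} (hA : 0 < A) (hB : 0 < B)
    (hk : ∀ α, ∀ᵐ β ∂ν, ‖k α β‖ ≤ A) (hl : ∀ β, ∀ᵐ α ∂μ, ‖l β α‖ ≤ B)
    (hu_zero : ⨆ α, ‖u α‖ₑ ≠ 0) (hu_top : ⨆ α, ‖u α‖ₑ ≠ ⊤)
    (hu : ∀ α, Integrable (fun β => v β * k α β) ν ∧ u α = ∫ β, v β * k α β ∂ν)
    (hv : ∀ β, Integrable (fun α => u α * l β α) μ ∧ v β = ∫ α, u α * l β α ∂μ) :
    ENNReal.ofReal (1 / (A * B)) ≤ μ {α | u α ≠ 0} * ν {β | v β ≠ 0} := by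
  have hu_le (α : Ω) : ‖u α‖ₑ ≤ ENNReal.ofReal A * ∫⁻ β, ‖v β‖ₑ ∂ν :=
    (hu α).2 ▸ enorm_integral_mul_le (hk α)
  have hv_le (β : Δ) : ‖v β‖ₑ ≤ ENNReal.ofReal B * ∫⁻ α, ‖u α‖ₑ ∂μ :=
    (hv β).2 ▸ enorm_integral_mul_le (hl β)
  have one_le := one_le_mul_measure_support_of_le_lintegral hu_zero hu_top hu_le hv_le
  simp only [Function.support, enorm_ne_zero] at one_le
  rw [ENNReal.ofReal_div_of_pos (mul_pos hA hB), ENNReal.ofReal_one, ENNReal.ofReal_mul hA.le]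
  exact ENNReal.div_le_of_le_mul' one_le

end IntegralOperator

/-- **∞-Unbounded Donoho-Stark-Elad-Bruckstein-Ricaud-Torrésani Uncertainty Principle.**
For unbounded continuous ∞-Schauder frames `({f_α}, {τ_α})` and `({g_β}, {ω_β})` of a Banach
space `X`, applied at a fixed `x` in the intersection of the domains of the analysis operators,
`μ(supp θ_f x) · ν(supp θ_g x) ≥ 1/(A·B)` in `ℝ≥0∞`. -/
theorem unbounded_infty_schauder_uncertainty
    {𝕜 X Ω Δ : Type*} [RCLike 𝕜]
    [NormedAddCommGroup X] [NormedSpace 𝕜 X] [CompleteSpace X]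
    [MeasurableSpace Ω] [MeasurableSpace Δ]
    (μ : Measure Ω) (ν : Measure Δ)
    (f : Ω → X →ₗ[𝕜] 𝕜) (g : Δ → X →ₗ[𝕜] 𝕜)
    (τ : Ω → X) (ω : Δ → X) (x : X)
    (A B : ℝ) (hA : 0 < A) (hB : 0 < B)
    (hfω : ∀ α β, ‖f α (ω β)‖ ≤ A)
    (hgτ : ∀ α β, ‖g β (τ α)‖ ≤ B)
    (hfbdd : (⨆ α, (‖f α x‖₊ : ℝ≥0∞)) < ⊤)
    (hfpos : 0 < ⨆ α, (‖f α x‖₊ : ℝ≥0∞))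
    (hgbdd : (⨆ β, (‖g β x‖₊ : ℝ≥0∞)) < ⊤)
    (hgpos : 0 < ⨆ β, (‖g β x‖₊ : ℝ≥0∞))
    (hrecf : ∀ α, Integrable (fun β => g β x * f α (ω β)) ν ∧
      f α x = ∫ β, g β x * f α (ω β) ∂ν)
    (hrecg : ∀ β, Integrable (fun α => f α x * g β (τ α)) μ ∧
      g β x = ∫ α, f α x * g β (τ α) ∂μ) :
    ENNReal.ofReal (1 / (A * B)) ≤ μ {α | f α x ≠ 0} * ν {β | g β x ≠ 0} :=
  unbounded_infty_schauder_uncertainty_general μ ν (f · x) (g · x) (fun α β => f α (ω β))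
    (fun β α => g β (τ α)) hA hB (fun α => ae_of_all _ (hfω α)) (fun β => ae_of_all _ (hgτ · β))
    hfpos.ne' hfbdd.ne hrecf hrecg
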